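/- arXiv:2107.14097 — 2 statements merged into one kernel-verified Lean document; each statement's English description precedes it below -/
import Mathlib

section
/- Lemma 7: run Algorithm 2 with the x-approval rule and k manipulators, and for each iteration i let p_t^a = F(p⃗ ∪ p⃗_M) after all k stages of iteration i, let u* be the member of U^i ranked lowest among U^i in p_t^a, and let d* be the member of D^i ranked highest among D^i in p_t^a. If for every iteration i (1 ≤ i ≤ ⌈m/2⌉) d* is ranked above u* in p_t^a, then no profile p⃗_m of k manipulative x-approval votes satisfies RC(F(p⃗ ∪ p⃗_m), p_o) = {p}; i.e., no manipulation by k manipulators makes p the negotiation result, and Algorithm 2 returns false. -/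
open Finset
open scoped Classical

variable {O : Type*} [Fintype O] [DecidableEq O]

/-- A vote is a strict total order on the outcome set `O`, represented by its position
function: `p o` is the number of outcomes that `o` is preferred over, so the most
preferred outcome has position `m - 1` and the least preferred position `0`. -/
def IsVote (p : O → ℕ) : Prop :=
  Function.Injective p ∧ ∀ o : O, p o < Fintype.card O

/-- The total score of candidate `c` under the scoring vector `sc` (`sc j` is the number
of points awarded to the candidate at position `j`) for the profile `P`. -/
def score (sc : ℕ → ℤ) (P : List (O → ℕ)) (c : O) : ℤ :=
  (P.map fun q => sc (q c)).sum

/-- The positional scoring rule used as a social welfare function: candidates are ordered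
by decreasing total score, ties being broken by the fixed strict tie-breaking order `tb`
(a smaller `tb`-value means preferred by the tie-breaking order).  The output is again a
position function: the position of `c` is the number of candidates ranked below `c`. -/
def swf (sc : ℕ → ℤ) (tb : O → ℕ) (P : List (O → ℕ)) : O → ℕ := fun c =>
  (univ.filter fun c' =>
      score sc P c' < score sc P c ∨ (score sc P c' = score sc P c ∧ tb c < tb c')).card

/-- `topSet p j = A^j(p)`, the set of the `j` most preferred outcomes of `p`. -/
def topSet (p : O → ℕ) (j : ℕ) : Finset O :=
  univ.filter fun o => Fintype.card O - j ≤ p o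

/-- The least `j ≥ 1` for which `A^j(p_t) ∩ A^j(p_o)` is nonempty, i.e. the iteration at
which the Rational Compromise rule terminates. -/
noncomputable def rcIndex (pt po : O → ℕ) : ℕ :=
  sInf {j | 1 ≤ j ∧ (topSet pt j ∩ topSet po j).Nonempty}

/-- The Rational Compromise bargaining rule: `A^j(p_t) ∩ A^j(p_o)` for the least `j ≥ 1`
making this intersection nonempty. -/
noncomputable def RC (pt po : O → ℕ) : Finset O :=
  topSet pt (rcIndex pt po) ∩ topSet po (rcIndex pt po)

/-- The `n` most preferred members of `S` according to the ranking `r`. -/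
def topWithin (r : O → ℕ) (S : Finset O) (n : ℕ) : Finset O :=
  S.filter fun o => (S.filter fun o' => r o < r o').card < n

/-- The `n` least preferred members of `S` according to the ranking `r`. -/
def botWithin (r : O → ℕ) (S : Finset O) (n : ℕ) : Finset O :=
  S.filter fun o => (S.filter fun o' => r o' < r o).card < n

/-- The vote built by the algorithms from a current ranking `r` and a set `H`:
the members of `H` occupy the `|H|` highest positions in reverse order of `r`
(the `r`-least preferred member of `H` is placed highest), and the members of `O ∖ H`
occupy the remaining lowest positions in reverse order of `r` (the `r`-most preferred
of them is placed lowest). -/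
def buildVote (r : O → ℕ) (H : Finset O) : O → ℕ := fun o =>
  if o ∈ H then Fintype.card O - H.card + (H.filter fun h => r o < r h).card
  else (univ.filter fun c => c ∉ H ∧ r o < r c).card

/-- `H^i` for the constructive algorithms: the preferred outcome `p` together with the
`i - 1` most preferred outcomes of `p_t` that do not belong to `A^i(p_o)`. -/
def Hset (pt po : O → ℕ) (p : O) (i : ℕ) : Finset O :=
  insert p (topWithin pt ((univ \ topSet po i).erase p) (i - 1))

/-- `H^i` for the destructive algorithms: `p*`, the most preferred outcome of `p_t` other
than `e` that belongs to `A^i(p_o)`, together with the `i - 1` most preferred outcomes of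
`p_t` other than `e` and `p*`. -/
def HsetD (pt po : O → ℕ) (e : O) (i : ℕ) : Finset O :=
  topWithin pt ((topSet po i).erase e) 1 ∪
    topWithin pt ((univ.erase e) \ topWithin pt ((topSet po i).erase e) 1) (i - 1)

/-- The manipulator profile built by Algorithm 2 (for a fixed iteration whose set is `H`)
after the given number of stages: at each stage one more vote is appended, built from the
current social ranking `F(p⃗ ∪ p⃗_M)`. -/
def stageProfile (sc : ℕ → ℤ) (tb : O → ℕ) (P : List (O → ℕ)) (H : Finset O) :
    ℕ → List (O → ℕ)
  | 0 => []
  | n + 1 =>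
      stageProfile sc tb P H n ++
        [buildVote (swf sc tb (P ++ stageProfile sc tb P H n)) H]

/-- The vote constructed by Algorithm 2 at stage `ℓ` (1-indexed). -/
def stageVote (sc : ℕ → ℤ) (tb : O → ℕ) (P : List (O → ℕ)) (H : Finset O) (ℓ : ℕ) :
    O → ℕ :=
  buildVote (swf sc tb (P ++ stageProfile sc tb P H (ℓ - 1))) H

/-- The sets `U^i_s`:  `U^i_0` consists of the member of `H^i` with the lowest position in
`p_t`, and `U^i_{s+1}` adds every candidate ranked above some member of `U^i_s` by the
stage-`l` vote (`1 ≤ l < k`) but below some member of `U^i_s` by the stage-`(l+1)` vote. -/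
noncomputable def Uaux (sc : ℕ → ℤ) (tb : O → ℕ) (P : List (O → ℕ)) (pt : O → ℕ)
    (H : Finset O) (k : ℕ) : ℕ → Finset O
  | 0 => botWithin pt H 1
  | s + 1 =>
      Uaux sc tb P pt H k s ∪
        univ.filter fun u =>
          ∃ l, 1 ≤ l ∧ l < k ∧
            (∃ u' ∈ Uaux sc tb P pt H k s,
              stageVote sc tb P H l u' < stageVote sc tb P H l u) ∧
            (∃ u' ∈ Uaux sc tb P pt H k s,
              stageVote sc tb P H (l + 1) u < stageVote sc tb P H (l + 1) u')

/-- `U^i = ⋃ₛ U^i_s`. -/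
noncomputable def Uset (sc : ℕ → ℤ) (tb : O → ℕ) (P : List (O → ℕ)) (pt : O → ℕ)
    (H : Finset O) (k : ℕ) : Finset O :=
  univ.filter fun u => ∃ s, u ∈ Uaux sc tb P pt H k s

/-- The sets `D^i_s`: `D^i_0` consists of the member of `O ∖ H^i` with the highest position
in `p_t`, and `D^i_{s+1}` adds every candidate ranked below some member of `D^i_s` by the
stage-`l` vote (`1 ≤ l < k`) but above some member of `D^i_s` by the stage-`(l+1)` vote. -/
noncomputable def Daux (sc : ℕ → ℤ) (tb : O → ℕ) (P : List (O → ℕ)) (pt : O → ℕ)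
    (H : Finset O) (k : ℕ) : ℕ → Finset O
  | 0 => topWithin pt (univ \ H) 1
  | s + 1 =>
      Daux sc tb P pt H k s ∪
        univ.filter fun d =>
          ∃ l, 1 ≤ l ∧ l < k ∧
            (∃ d' ∈ Daux sc tb P pt H k s,
              stageVote sc tb P H l d < stageVote sc tb P H l d') ∧
            (∃ d' ∈ Daux sc tb P pt H k s,
              stageVote sc tb P H (l + 1) d' < stageVote sc tb P H (l + 1) d)

/-- `D^i = ⋃ₛ D^i_s`. -/
noncomputable def Dset (sc : ℕ → ℤ) (tb : O → ℕ) (P : List (O → ℕ)) (pt : O → ℕ)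
    (H : Finset O) (k : ℕ) : Finset O :=
  univ.filter fun d => ∃ s, d ∈ Daux sc tb P pt H k s

/-- The Borda scoring vector `(m-1, m-2, …, 1, 0)`: position `j` gets `j` points. -/
def bordaVec : ℕ → ℤ := fun j => (j : ℤ)

/-- The `x`-approval scoring vector for `m` candidates: the `x` highest positions get one
point, the rest get zero. -/
def approvalVec (m x : ℕ) : ℕ → ℤ := fun j => if m ≤ j + x then 1 else 0

/-- `sc` is a scoring vector for `m` candidates: `s_{m-1} ≥ … ≥ s_0 ≥ 0` and
`s_{m-1} > s_0`. -/
def IsScoringVector (m : ℕ) (sc : ℕ → ℤ) : Prop :=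
  (∀ j, j + 1 < m → sc j ≤ sc (j + 1)) ∧ 0 ≤ sc 0 ∧ sc 0 < sc (m - 1)

/-- Algorithm 1 (constructive single-voter manipulation) returns the vote `pa`:
the guard `pos(p, p_o) ≥ ⌈m/2⌉` holds and `pa` is the vote built at the first iteration
`i ∈ {1, …, ⌈m/2⌉}` at which the manipulation check succeeds. -/
def alg1Returns (sc : ℕ → ℤ) (tb : O → ℕ) (P : List (O → ℕ)) (po : O → ℕ) (p : O)
    (pa : O → ℕ) : Prop :=
  (Fintype.card O + 1) / 2 ≤ po p ∧
    ∃ i, 1 ≤ i ∧ i ≤ (Fintype.card O + 1) / 2 ∧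
      pa = buildVote (swf sc tb P) (Hset (swf sc tb P) po p i) ∧
      RC (swf sc tb (P ++ [pa])) po = {p} ∧
      ∀ j, 1 ≤ j → j < i →
        RC (swf sc tb (P ++ [buildVote (swf sc tb P) (Hset (swf sc tb P) po p j)])) po ≠
          {p}

/-- Algorithm 2 (constructive coalitional manipulation) run with `k` manipulators returns
the profile `PM`: the guard `pos(p, p_o) ≥ ⌈m/2⌉` holds and `PM` is the `k`-stage profile
built at the first iteration `i ∈ {1, …, ⌈m/2⌉}` at which the manipulation check succeeds. -/
def alg2Returns (sc : ℕ → ℤ) (tb : O → ℕ) (P : List (O → ℕ)) (po : O → ℕ) (p : O)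
    (k : ℕ) (PM : List (O → ℕ)) : Prop :=
  (Fintype.card O + 1) / 2 ≤ po p ∧
    ∃ i, 1 ≤ i ∧ i ≤ (Fintype.card O + 1) / 2 ∧
      PM = stageProfile sc tb P (Hset (swf sc tb P) po p i) k ∧
      RC (swf sc tb (P ++ PM)) po = {p} ∧
      ∀ j, 1 ≤ j → j < i →
        RC (swf sc tb (P ++ stageProfile sc tb P (Hset (swf sc tb P) po p j) k)) po ≠ {p}

/-- The modified Algorithm 1 (destructive single-voter manipulation) returns the vote
`pa`: the guard `pos(e, p_o) < ⌊m/2⌋` fails and `pa` is the vote built at the first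
iteration `i ∈ {1, …, ⌈m/2⌉}` at which `e` is excluded from the Rational Compromise. -/
def alg1ReturnsD (sc : ℕ → ℤ) (tb : O → ℕ) (P : List (O → ℕ)) (po : O → ℕ) (e : O)
    (pa : O → ℕ) : Prop :=
  Fintype.card O / 2 ≤ po e ∧
    ∃ i, 1 ≤ i ∧ i ≤ (Fintype.card O + 1) / 2 ∧
      pa = buildVote (swf sc tb P) (HsetD (swf sc tb P) po e i) ∧
      e ∉ RC (swf sc tb (P ++ [pa])) po ∧
      ∀ j, 1 ≤ j → j < i →
        e ∈ RC (swf sc tb (P ++ [buildVote (swf sc tb P) (HsetD (swf sc tb P) po e j)])) po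

/-- The modified Algorithm 2 (destructive coalitional manipulation) run with `k`
manipulators returns the profile `PM`: the guard `pos(e, p_o) < ⌊m/2⌋` fails and `PM` is
the `k`-stage profile built at the first iteration `i ∈ {1, …, ⌈m/2⌉}` at which `e` is
excluded from the Rational Compromise. -/
def alg2ReturnsD (sc : ℕ → ℤ) (tb : O → ℕ) (P : List (O → ℕ)) (po : O → ℕ) (e : O)
    (k : ℕ) (PM : List (O → ℕ)) : Prop :=
  Fintype.card O / 2 ≤ po e ∧
    ∃ i, 1 ≤ i ∧ i ≤ (Fintype.card O + 1) / 2 ∧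
      PM = stageProfile sc tb P (HsetD (swf sc tb P) po e i) k ∧
      e ∉ RC (swf sc tb (P ++ PM)) po ∧
      ∀ j, 1 ≤ j → j < i →
        e ∈ RC (swf sc tb (P ++ stageProfile sc tb P (HsetD (swf sc tb P) po e j) k)) po

/-- The set `U^i` arising from running the `k` stages of Algorithm 2 at iteration `i`. -/
noncomputable def UsetAlg (sc : ℕ → ℤ) (tb : O → ℕ) (P : List (O → ℕ)) (po : O → ℕ)
    (p : O) (i k : ℕ) : Finset O :=
  Uset sc tb P (swf sc tb P) (Hset (swf sc tb P) po p i) k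

/-- The set `D^i` arising from running the `k` stages of Algorithm 2 at iteration `i`. -/
noncomputable def DsetAlg (sc : ℕ → ℤ) (tb : O → ℕ) (P : List (O → ℕ)) (po : O → ℕ)
    (p : O) (i k : ℕ) : Finset O :=
  Dset sc tb P (swf sc tb P) (Hset (swf sc tb P) po p i) k

/-- The vote constructed at stage `ℓ` of iteration `i` of Algorithm 2. -/
def stageVoteAlg (sc : ℕ → ℤ) (tb : O → ℕ) (P : List (O → ℕ)) (po : O → ℕ)
    (p : O) (i ℓ : ℕ) : O → ℕ :=
  stageVote sc tb P (Hset (swf sc tb P) po p i) ℓ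

/-- `s_ℓ(c)`: the total score of candidate `c` in `F(p⃗ ∪ p⃗_M)` after stage `ℓ` of
iteration `i` of Algorithm 2. -/
def stageScoreAlg (sc : ℕ → ℤ) (tb : O → ℕ) (P : List (O → ℕ)) (po : O → ℕ)
    (p : O) (i ℓ : ℕ) (c : O) : ℤ :=
  score sc (P ++ stageProfile sc tb P (Hset (swf sc tb P) po p i) ℓ) c

/-- `F(p⃗ ∪ p⃗_M)` after stage `ℓ` of iteration `i` of Algorithm 2. -/
def stageSwfAlg (sc : ℕ → ℤ) (tb : O → ℕ) (P : List (O → ℕ)) (po : O → ℕ)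
    (p : O) (i ℓ : ℕ) : O → ℕ :=
  swf sc tb (P ++ stageProfile sc tb P (Hset (swf sc tb P) po p i) ℓ)

/-!
Call the deficit of `h` against `d` the number of points `h` must gain on `d` to be ranked above
it. If `k` votes put a set `H` on top, then every deficit of an `h ∈ H` against a `d ∉ H` is at
most the number of those votes approving `h`, and at most the number vetoing `d`.

If `x ≤ |H|`, fix `d`: each vote of Algorithm 2 approves only members of `H`, namely the `x` with
the largest deficits against `d`. If `|H| ≤ x`, fix `h`: each vote vetoes only members of `O ∖ H`,
namely the `m - x` against which `h` has the largest deficits. In both cases the votes serve the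
`c` largest demands in each of `k` rounds, and this meets all demands as soon as each of them is
at most `k` and their sum is at most `k * c`. Hence Algorithm 2 puts `H` on top whenever `k` votes
can.

If a manipulation yields `{p}` at iteration `i`, its votes put some `T` with `p ∈ T` on top, where
`|T| = i` and `p` is the only member of `T` in `A^i(p_o)`. The honest ranking `p_t` places
`H^i \ T` above `T \ H^i`, so exchanging the roles of these two sets puts `H^i` on top instead.
So does Algorithm 2, and then `u* ∈ H^i` ends up above `d* ∉ H^i`.
-/

section Counting

variable {α β : Type*}

theorem card_filter_lt_card_filter {s : Finset α} {p q : α → Prop} [DecidablePred p]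
    [DecidablePred q] (hpq : ∀ a ∈ s, p a → q a) {b : α} (hb : b ∈ s) (hqb : q b)
    (hpb : ¬p b) : #(s.filter p) < #(s.filter q) := by
  refine card_lt_card ((ssubset_iff_of_subset fun a ha => ?_).2
    ⟨b, mem_filter.2 ⟨hb, hqb⟩, fun h => hpb (mem_filter.1 h).2⟩)
  rw [mem_filter] at ha ⊢
  exact ⟨ha.1, hpq a ha.1 ha.2⟩

theorem card_filter_comp_of_injOn {s : Finset α} {f : α → ℕ} (hf : Set.InjOn f s)
    (hlt : ∀ a ∈ s, f a < #s) (p : ℕ → Prop) [DecidablePred p] :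
    #{a ∈ s | p (f a)} = #{j ∈ range #s | p j} := by
  have himage : s.image f = range #s :=
    eq_of_subset_of_card_le (image_subset_iff.2 fun a ha => mem_range.2 (hlt a ha))
      (by rw [card_image_of_injOn hf, card_range])
  rw [← himage, filter_image, card_image_of_injOn (hf.mono (coe_subset.2 (filter_subset _ s)))]

theorem exists_mem_forall_ne_lt [LinearOrder β] {f : α → β} (hf : Function.Injective f)
    {s : Finset α} (hs : s.Nonempty) : ∃ a ∈ s, ∀ b ∈ s, b ≠ a → f a < f b := by
  obtain ⟨a, ha, hmin⟩ := s.exists_min_image f hs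
  exact ⟨a, ha, fun b hb hne => (hmin b hb).lt_of_ne (hf.ne hne.symm)⟩

theorem sum_countP_mem [Fintype α] [DecidableEq α] {A : β → Finset α} {n : ℕ} {l : List β}
    (hA : ∀ b ∈ l, #(A b) = n) : ∑ a, l.countP (fun b => a ∈ A b) = l.length * n := by
  induction l with
  | nil => simp
  | cons b l ih =>
    rw [List.forall_mem_cons] at hA
    simp only [List.countP_cons, decide_eq_true_eq, sum_add_distrib, ih hA.2, sum_boole,
      filter_univ_mem, hA.1, List.length_cons, Nat.cast_id]
    ring

theorem exists_perm_exchange [DecidableEq α] {s t : Finset α} (h : #s = #t) :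
    ∃ σ : Equiv.Perm α, (∀ a ∈ s \ t, σ a ∈ t \ s) ∧ (∀ a ∈ t \ s, σ a ∈ s \ t) ∧
      ∀ a, (a ∈ s ↔ a ∈ t) → σ a = a := by
  let e : ↥(s \ t) ≃ ↥(t \ s) := equivOfCardEq (card_sdiff_comm h)
  let f : α → α := fun a =>
    if ha : a ∈ s \ t then e ⟨a, ha⟩ else if hb : a ∈ t \ s then e.symm ⟨a, hb⟩ else a
  have hdisj : ∀ a ∈ t \ s, a ∉ s \ t := fun a ha ha' =>
    (mem_sdiff.1 ha).2 (mem_sdiff.1 ha').1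
  have hfs : ∀ a (ha : a ∈ s \ t), f a = e ⟨a, ha⟩ := fun a ha => dif_pos ha
  have hft : ∀ a (ha : a ∈ t \ s), f a = e.symm ⟨a, ha⟩ := fun a ha =>
    (dif_neg (hdisj a ha)).trans (dif_pos ha)
  have hfix : ∀ a, a ∉ s \ t → a ∉ t \ s → f a = a := fun a hs ht =>
    (dif_neg hs).trans (dif_neg ht)
  have hinv : Function.Involutive f := by
    intro a
    by_cases hs : a ∈ s \ t
    · rw [hfs a hs, hft _ (e ⟨a, hs⟩).2]
      simp
    by_cases ht : a ∈ t \ s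
    · rw [hft a ht, hfs _ (e.symm ⟨a, ht⟩).2]
      simp
    rw [hfix a hs ht, hfix a hs ht]
  refine ⟨hinv.toPerm, fun a ha => ?_, fun a ha => ?_, fun a ha => hfix a ?_ ?_⟩
  · rw [Function.Involutive.coe_toPerm, hfs a ha]
    exact (e ⟨a, ha⟩).2
  · rw [Function.Involutive.coe_toPerm, hft a ha]
    exact (e.symm ⟨a, ha⟩).2
  · exact fun h' => (mem_sdiff.1 h').2 (ha.1 (mem_sdiff.1 h').1)
  · exact fun h' => (mem_sdiff.1 h').2 (ha.2 (mem_sdiff.1 h').1)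

end Counting

section GreedyService

variable {α : Type*} [DecidableEq α]

/-- An element of `s \ y` with demand `k + 1` would force demand `k + 1` on all of `y` as well,
exceeding the total. Serving a demand that is already `0` wastes a point, but then every demand
outside `y` is `0` too. -/
theorem greedy_round {s y : Finset α} {n : α → ℕ} {k : ℕ} (hys : y ⊆ s)
    (htop : ∀ a ∈ y, ∀ b ∈ s, b ∉ y → n b ≤ n a) (hle : ∀ a ∈ s, n a ≤ k + 1)
    (hsum : ∑ a ∈ s, n a ≤ (k + 1) * #y) :
    (∀ a ∈ s, n a - (if a ∈ y then 1 else 0) ≤ k) ∧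
      ∑ a ∈ s, (n a - if a ∈ y then 1 else 0) ≤ k * #y := by
  constructor
  · intro a ha
    split_ifs with hay
    · exact Nat.sub_le_of_le_add (hle a ha)
    by_contra! hgt
    have hcard : (k + 1) * #(insert a y) ≤ ∑ b ∈ insert a y, n b := by
      rw [mul_comm, ← smul_eq_mul]
      refine card_nsmul_le_sum (insert a y) n (k + 1) fun b hb => ?_
      obtain rfl | hby := mem_insert.1 hb
      · omega
      · have := htop b hby a ha hay
        omega
    have hsub := sum_le_sum_of_subset (f := n) (insert_subset ha hys)
    rw [card_insert_of_notMem hay] at hcard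
    linarith
  · by_cases hunserved : ∃ b ∈ s, b ∉ y ∧ 0 < n b
    · obtain ⟨b, hbs, hby, hb⟩ := hunserved
      have hserved : ∑ a ∈ s, (n a - if a ∈ y then 1 else 0) + #y = ∑ a ∈ s, n a := by
        rw [card_eq_sum_ones, ← inter_eq_right.2 hys, ← sum_ite_mem, ← sum_add_distrib]
        refine sum_congr rfl fun a _ => ?_
        have : a ∈ y → 0 < n a := fun ha => hb.trans_le (htop a ha b hbs hby)
        rw [inter_eq_right.2 hys]
        split_ifs with hay <;> grind
      linarith
    · push Not at hunserved
      calc ∑ a ∈ s, (n a - if a ∈ y then 1 else 0)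
          ≤ ∑ a ∈ s, if a ∈ y then k else 0 := by
            refine sum_le_sum fun a ha => ?_
            have := hle a ha
            have := hunserved a ha
            split_ifs <;> grind
        _ = k * #y := by rw [sum_ite_mem, inter_eq_right.2 hys, sum_const, smul_eq_mul, mul_comm]

theorem greedy_demands_met {s : Finset α} {c k : ℕ} {y : ℕ → Finset α} {n : ℕ → α → ℕ}
    (hys : ∀ l, y l ⊆ s) (hyc : ∀ l, #(y l) = c)
    (htop : ∀ l, ∀ a ∈ y l, ∀ b ∈ s, b ∉ y l → n l b ≤ n l a)
    (hstep : ∀ l, ∀ a ∈ s, n (l + 1) a = n l a - if a ∈ y l then 1 else 0)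
    (hle : ∀ a ∈ s, n 0 a ≤ k) (hsum : ∑ a ∈ s, n 0 a ≤ k * c) : ∀ a ∈ s, n k a = 0 := by
  induction k generalizing y n with
  | zero => exact fun a ha => Nat.le_zero.1 (hle a ha)
  | succ k ih =>
    obtain ⟨hle', hsum'⟩ := greedy_round (hys 0) (htop 0) hle (by rwa [hyc 0])
    exact ih (y := fun l => y (l + 1)) (n := fun l => n (l + 1)) (fun l => hys _)
      (fun l => hyc _) (fun l => htop _) (fun l => hstep _)
      (fun a ha => (hstep 0 a ha).trans_le (hle' a ha))
      ((sum_congr rfl (hstep 0)).trans_le (hyc 0 ▸ hsum'))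

end GreedyService

/-- The members of `H` occupy the highest places of the ranking `r`. -/
def RanksOnTop {α : Type*} (r : α → ℕ) (H : Finset α) : Prop :=
  ∀ h ∈ H, ∀ d ∉ H, r d < r h

section Votes

variable {α : Type*}

theorem RanksOnTop.mem_of_lt {r : α → ℕ} {H : Finset α} (h : RanksOnTop r H)
    {a b : α} (ha : a ∈ H) (hab : r a < r b) : b ∈ H := by
  by_contra hb
  exact hab.asymm (h a ha b hb)

theorem card_topWithin {r : α → ℕ} (hr : Function.Injective r) {s : Finset α}
    {n : ℕ} (hn : n ≤ #s) : #(topWithin r s n) = n := by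
  have hmono : ∀ a ∈ s, ∀ b, r b < r a → #{o ∈ s | r a < r o} < #{o ∈ s | r b < r o} :=
    fun a ha b hba =>
      card_filter_lt_card_filter (fun o _ hao => hba.trans hao) ha hba (lt_irrefl _)
  have hinj : Set.InjOn (fun a => #{o ∈ s | r a < r o}) s := by
    intro a ha b hb hab
    by_contra hne
    rcases (hr.ne hne).lt_or_gt with h | h
    · exact (hmono b hb a h).ne' hab
    · exact (hmono a ha b h).ne hab
  have hlt : ∀ a ∈ s, #{o ∈ s | r a < r o} < #s := fun a ha =>
    card_lt_card (filter_ssubset.2 ⟨a, ha, lt_irrefl _⟩)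
  rw [topWithin, card_filter_comp_of_injOn hinj hlt (· < n)]
  have hfilter : {j ∈ range #s | j < n} = range n := by
    ext j
    simp only [mem_filter, mem_range]
    omega
  rw [hfilter, card_range]

variable [Fintype α]

theorem ranksOnTop_topSet (r : α → ℕ) (j : ℕ) : RanksOnTop r (topSet r j) := by
  intro h hh d hd
  simp only [topSet, mem_filter, mem_univ, true_and, not_le] at hh hd
  exact hd.trans_le hh

theorem topSet_mono (r : α → ℕ) : Monotone (topSet r) := fun _ _ hij =>
  monotone_filter_right _ fun _ _ ha => (Nat.sub_le_sub_left hij _).trans ha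

theorem card_topSet {q : α → ℕ} (hq : IsVote q) {j : ℕ} (hj : j ≤ Fintype.card α) :
    #(topSet q j) = j := by
  have hfilter : {l ∈ range (Fintype.card α) | Fintype.card α - j ≤ l} =
      Ico (Fintype.card α - j) (Fintype.card α) := by
    ext l
    simp [and_comm]
  rw [topSet, card_filter_comp_of_injOn hq.1.injOn (fun o _ => hq.2 o)
    (fun l => Fintype.card α - j ≤ l), card_univ, hfilter, Nat.card_Ico]
  omega

theorem IsVote.comp_perm {q : α → ℕ} (hq : IsVote q) (σ : Equiv.Perm α) : IsVote (q ∘ σ) :=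
  ⟨hq.1.comp σ.injective, fun o => hq.2 (σ o)⟩

end Votes

section SocialRanking

variable {α : Type*} {sc : ℕ → ℤ} {tb : α → ℕ} {P Q : List (α → ℕ)} {c c' : α}

theorem score_append (sc : ℕ → ℤ) (P Q : List (α → ℕ)) (c : α) :
    score sc (P ++ Q) c = score sc P c + score sc Q c := by
  simp [score]

theorem score_singleton (sc : ℕ → ℤ) (q : α → ℕ) (c : α) : score sc [q] c = sc (q c) := by
  simp [score]

theorem score_map_comp (sc : ℕ → ℤ) (P : List (α → ℕ)) (σ : α → α) (c : α) :
    score sc (P.map (· ∘ σ)) c = score sc P (σ c) := by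
  simp [score, Function.comp_def]

variable [Fintype α]

theorem swf_lt_swf_iff (htb : Function.Injective tb) :
    swf sc tb P c' < swf sc tb P c ↔
      score sc P c' < score sc P c ∨ score sc P c' = score sc P c ∧ tb c < tb c' := by
  have hmono : ∀ a b, (score sc P a < score sc P b ∨ score sc P a = score sc P b ∧ tb b < tb a) →
      swf sc tb P a < swf sc tb P b := fun a b hab =>
    card_filter_lt_card_filter (fun o _ ho => by omega) (mem_univ a) hab (by simp)
  refine ⟨fun hlt => ?_, hmono c' c⟩
  by_contra hnot
  have hne : tb c ≠ tb c' := fun htie => hlt.ne (congrArg _ (htb htie).symm)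
  exact hlt.asymm (hmono c c' (by omega))

theorem isVote_swf (sc : ℕ → ℤ) (htb : Function.Injective tb) (P : List (α → ℕ)) :
    IsVote (swf sc tb P) := by
  refine ⟨fun a b hab => ?_, fun o => card_lt_card (filter_ssubset.2 ⟨o, mem_univ o, by simp⟩)⟩
  have hab' := hab.not_lt
  have hba' := hab.not_gt
  rw [swf_lt_swf_iff htb] at hab' hba'
  exact htb (by omega)

/-- With the roles permuted, `h` collects the added points of `σ h` and `d` those of `σ d`;
`hup` and `hdown` say that the points from `P` then favour `h` over `d` even more. -/
theorem RanksOnTop.swf_map_comp (htb : Function.Injective tb) {H T : Finset α} {σ : α → α}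
    (hσ : ∀ a, σ a ∈ T ↔ a ∈ H) (hup : ∀ a ∈ H, swf sc tb P (σ a) ≤ swf sc tb P a)
    (hdown : ∀ a ∉ H, swf sc tb P a ≤ swf sc tb P (σ a))
    (hT : RanksOnTop (swf sc tb (P ++ Q)) T) :
    RanksOnTop (swf sc tb (P ++ Q.map (· ∘ σ))) H := by
  intro h hh d hd
  have hlt := hT (σ h) ((hσ h).2 hh) (σ d) fun hmem => hd ((hσ d).1 hmem)
  have hle_h := hup h hh
  have hle_d := hdown d hd
  rw [← not_lt] at hle_h hle_d
  simp only [swf_lt_swf_iff htb, score_append, score_map_comp] at hlt hle_h hle_d ⊢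
  omega

end SocialRanking

section Deficit

variable {α : Type*} {sc : ℕ → ℤ} {tb : α → ℕ} {P Q : List (α → ℕ)} {c c' d h : α}

/-- The number of points that `h` has to gain on `d` in order to be ranked above `d`. The
truncation at `0` is intended: a lead of `h` over `d` counts as no demand. -/
def deficit (sc : ℕ → ℤ) (tb : α → ℕ) (P : List (α → ℕ)) (h d : α) : ℕ :=
  (score sc P d - score sc P h + if tb d < tb h then 1 else 0).toNat

theorem swf_lt_swf_iff_deficit_eq_zero [Fintype α] (htb : Function.Injective tb)
    (hne : h ≠ d) : swf sc tb P d < swf sc tb P h ↔ deficit sc tb P h d = 0 := by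
  have := htb.ne hne
  rw [swf_lt_swf_iff htb, deficit]
  split_ifs <;> omega

theorem deficit_le_of_swf_append_lt [Fintype α] (htb : Function.Injective tb)
    (hlt : swf sc tb (P ++ Q) d < swf sc tb (P ++ Q) h) :
    deficit sc tb P h d ≤ (score sc Q h - score sc Q d).toNat := by
  rw [swf_lt_swf_iff htb, score_append, score_append] at hlt
  rw [deficit]
  split_ifs <;> omega

theorem deficit_le_deficit_left [Fintype α] (htb : Function.Injective tb)
    (hle : swf sc tb P c ≤ swf sc tb P c') (d : α) :
    deficit sc tb P c' d ≤ deficit sc tb P c d := by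
  rw [← not_lt, swf_lt_swf_iff htb] at hle
  unfold deficit
  split_ifs <;> omega

theorem deficit_le_deficit_right [Fintype α] (htb : Function.Injective tb)
    (hle : swf sc tb P c ≤ swf sc tb P c') (h : α) :
    deficit sc tb P h c ≤ deficit sc tb P h c' := by
  rw [← not_lt, swf_lt_swf_iff htb] at hle
  unfold deficit
  split_ifs <;> omega

end Deficit

section Approval

variable {α : Type*} [Fintype α] [DecidableEq α] {x : ℕ} {tb : α → ℕ}
  {P Q : List (α → ℕ)} {q : α → ℕ} {d h : α}

theorem approvalVec_card_apply (x : ℕ) (q : α → ℕ) (c : α) :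
    approvalVec (Fintype.card α) x (q c) = if c ∈ topSet q x then 1 else 0 := by
  simp [approvalVec, topSet]

theorem score_approvalVec (x : ℕ) (Q : List (α → ℕ)) (c : α) :
    score (approvalVec (Fintype.card α) x) Q c = Q.countP (fun q => c ∈ topSet q x) := by
  induction Q with
  | nil => simp [score]
  | cons q Q ih =>
    rw [score] at ih
    rw [score, List.map_cons, List.sum_cons, ih, approvalVec_card_apply, List.countP_cons]
    simp [add_comm]

theorem deficit_approvalVec_le_min_countP (htb : Function.Injective tb)
    (hlt : swf (approvalVec (Fintype.card α) x) tb (P ++ Q) d <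
      swf (approvalVec (Fintype.card α) x) tb (P ++ Q) h) :
    deficit (approvalVec (Fintype.card α) x) tb P h d ≤
      min (Q.countP fun q => h ∈ topSet q x) (Q.countP fun q => d ∈ (topSet q x)ᶜ) := by
  have hle := deficit_le_of_swf_append_lt htb hlt
  have hh : Q.countP (fun q => decide (h ∈ topSet q x)) ≤ Q.length := List.countP_le_length
  have hd := Q.length_eq_countP_add_countP (fun q => d ∈ topSet q x)
  simp only [score_approvalVec, decide_eq_true_eq] at hle hd
  simp only [mem_compl]
  omega

theorem deficit_concat_of_notMem (hd : d ∉ topSet q x) (h : α) :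
    deficit (approvalVec (Fintype.card α) x) tb (P ++ [q]) h d =
      deficit (approvalVec (Fintype.card α) x) tb P h d - if h ∈ topSet q x then 1 else 0 := by
  simp only [deficit, score_append, score_singleton, approvalVec_card_apply, hd, if_false]
  split_ifs <;> omega

theorem deficit_concat_of_mem (hh : h ∈ topSet q x) (d : α) :
    deficit (approvalVec (Fintype.card α) x) tb (P ++ [q]) h d =
      deficit (approvalVec (Fintype.card α) x) tb P h d -
        if d ∈ (topSet q x)ᶜ then 1 else 0 := by
  simp only [deficit, score_append, score_singleton, approvalVec_card_apply, hh, if_true,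
    mem_compl]
  split_ifs <;> omega

end Approval

section AlgorithmVotes

variable {r : O → ℕ} {H : Finset O} {a b : O}

theorem buildVote_lt_of_notMem (r : O → ℕ) (ha : a ∉ H) :
    buildVote r H a < Fintype.card O - #H := by
  rw [buildVote, if_neg ha, ← card_compl, ← filter_univ_mem Hᶜ]
  exact card_filter_lt_card_filter (fun c _ hc => mem_compl.2 hc.1) (mem_univ a)
    (mem_compl.2 ha) (by simp)

theorem topSet_buildVote_card (r : O → ℕ) (H : Finset O) : topSet (buildVote r H) #H = H := by
  ext a
  rw [topSet, mem_filter_univ]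
  refine ⟨fun hle => ?_, fun ha => by simp [buildVote, ha]⟩
  by_contra ha
  exact hle.not_gt (buildVote_lt_of_notMem r ha)

theorem ranksOnTop_buildVote (r : O → ℕ) (H : Finset O) : RanksOnTop (buildVote r H) H := by
  simpa only [topSet_buildVote_card] using ranksOnTop_topSet (buildVote r H) #H

theorem buildVote_lt_buildVote (hab : a ∈ H ↔ b ∈ H) (hlt : r a < r b) :
    buildVote r H b < buildVote r H a := by
  by_cases ha : a ∈ H
  · have hb := hab.1 ha
    rw [buildVote, buildVote, if_pos hb, if_pos ha, add_lt_add_iff_left]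
    exact card_filter_lt_card_filter (fun c _ hc => hlt.trans hc) hb hlt (lt_irrefl _)
  · have hb := (not_congr hab).1 ha
    rw [buildVote, buildVote, if_neg hb, if_neg ha]
    exact card_filter_lt_card_filter (fun c _ hc => ⟨hc.1, hlt.trans hc.2⟩) (mem_univ b)
      ⟨hb, hlt⟩ (by simp)

theorem isVote_buildVote (hr : Function.Injective r) (H : Finset O) :
    IsVote (buildVote r H) := by
  constructor
  · intro a b hab
    have hmem : a ∈ H ↔ b ∈ H := by
      rw [← topSet_buildVote_card r H, topSet, mem_filter_univ, mem_filter_univ, hab]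
    by_contra hne
    rcases (hr.ne hne).lt_or_gt with hlt | hlt
    · exact (buildVote_lt_buildVote hmem hlt).ne' hab
    · exact (buildVote_lt_buildVote hmem.symm hlt).ne hab
  · intro a
    by_cases ha : a ∈ H
    · have hlt : #{c ∈ H | r a < r c} < #H :=
        card_lt_card (filter_ssubset.2 ⟨a, ha, lt_irrefl _⟩)
      have hle := card_le_univ H
      rw [buildVote, if_pos ha]
      omega
    · exact (buildVote_lt_of_notMem r ha).trans_le (Nat.sub_le _ _)

theorem le_of_mem_topSet_buildVote {x : ℕ} (hab : a ∈ H ↔ b ∈ H)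
    (ha : a ∈ topSet (buildVote r H) x) (hb : b ∉ topSet (buildVote r H) x) : r a ≤ r b :=
  le_of_not_gt fun hlt =>
    (buildVote_lt_buildVote hab.symm hlt).asymm (ranksOnTop_topSet _ x a ha b hb)

variable {sc : ℕ → ℤ} {tb : O → ℕ} {P : List (O → ℕ)}

theorem length_stageProfile (sc : ℕ → ℤ) (tb : O → ℕ) (P : List (O → ℕ)) (H : Finset O)
    (k : ℕ) : (stageProfile sc tb P H k).length = k := by
  induction k with
  | zero => rfl
  | succ k ih => rw [stageProfile, List.length_append, ih, List.length_singleton]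

theorem isVote_of_mem_stageProfile (htb : Function.Injective tb) {k : ℕ} :
    ∀ q ∈ stageProfile sc tb P H k, IsVote q := by
  induction k with
  | zero => simp [stageProfile]
  | succ k ih =>
    intro q hq
    rw [stageProfile, List.mem_append, List.mem_singleton] at hq
    rcases hq with hq | rfl
    · exact ih q hq
    · exact isVote_buildVote (isVote_swf sc htb _).1 H

theorem append_stageProfile_succ (sc : ℕ → ℤ) (tb : O → ℕ) (P : List (O → ℕ)) (H : Finset O)
    (l : ℕ) : P ++ stageProfile sc tb P H (l + 1) =
      P ++ stageProfile sc tb P H l ++ [buildVote (swf sc tb (P ++ stageProfile sc tb P H l)) H] :=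
  (List.append_assoc ..).symm

end AlgorithmVotes

section GreedyOptimality

variable {x : ℕ} {tb : O → ℕ} {P Q : List (O → ℕ)} {H : Finset O}

theorem deficit_stageProfile_eq_zero_of_le_card (hx : x ≤ Fintype.card O)
    (htb : Function.Injective tb) (hQ : ∀ q ∈ Q, IsVote q)
    (hsep : RanksOnTop (swf (approvalVec (Fintype.card O) x) tb (P ++ Q)) H) (hxH : x ≤ #H)
    {h d : O} (hh : h ∈ H) (hd : d ∉ H) :
    deficit (approvalVec (Fintype.card O) x) tb
      (P ++ stageProfile (approvalVec (Fintype.card O) x) tb P H Q.length) h d = 0 := by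
  set sc := approvalVec (Fintype.card O) x
  let profile (l : ℕ) := P ++ stageProfile sc tb P H l
  let approved (l : ℕ) := topSet (buildVote (swf sc tb (profile l)) H) x
  have hsub : ∀ l, approved l ⊆ H := fun l =>
    (topSet_mono _ hxH).trans_eq (topSet_buildVote_card _ H)
  have hbound : ∀ a ∈ H, deficit sc tb P a d ≤ Q.countP (fun q => a ∈ topSet q x) :=
    fun a ha => (deficit_approvalVec_le_min_countP htb (hsep a ha d hd)).trans (min_le_left _ _)
  refine greedy_demands_met (y := approved) (n := fun l a => deficit sc tb (profile l) a d) hsub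
    (fun l => card_topSet (isVote_buildVote (isVote_swf sc htb _).1 H) hx) ?_ ?_ ?_ ?_ h hh
  · exact fun l a ha b hb hby => deficit_le_deficit_left htb
      (le_of_mem_topSet_buildVote (iff_of_true (hsub l ha) hb) ha hby) d
  · intro l a _
    simp only [profile, append_stageProfile_succ]
    exact deficit_concat_of_notMem (fun hmem => hd (hsub l hmem)) a
  · simpa [profile, stageProfile] using fun a ha => (hbound a ha).trans List.countP_le_length
  · calc ∑ a ∈ H, deficit sc tb (profile 0) a d
        ≤ ∑ a ∈ H, Q.countP (fun q => a ∈ topSet q x) := by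
          simpa [profile, stageProfile] using sum_le_sum hbound
      _ ≤ ∑ a, Q.countP (fun q => a ∈ topSet q x) := sum_le_sum_of_subset (subset_univ H)
      _ = Q.length * x := sum_countP_mem fun q hq => card_topSet (hQ q hq) hx

theorem deficit_stageProfile_eq_zero_of_card_le (hx : x ≤ Fintype.card O)
    (htb : Function.Injective tb) (hQ : ∀ q ∈ Q, IsVote q)
    (hsep : RanksOnTop (swf (approvalVec (Fintype.card O) x) tb (P ++ Q)) H) (hHx : #H ≤ x)
    {h d : O} (hh : h ∈ H) (hd : d ∉ H) :
    deficit (approvalVec (Fintype.card O) x) tb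
      (P ++ stageProfile (approvalVec (Fintype.card O) x) tb P H Q.length) h d = 0 := by
  set sc := approvalVec (Fintype.card O) x
  let profile (l : ℕ) := P ++ stageProfile sc tb P H l
  let vetoed (l : ℕ) := (topSet (buildVote (swf sc tb (profile l)) H) x)ᶜ
  have hsub : ∀ l, H ⊆ topSet (buildVote (swf sc tb (profile l)) H) x := fun l =>
    (topSet_buildVote_card _ H).symm.trans_subset (topSet_mono _ hHx)
  have hcard : ∀ q : O → ℕ, IsVote q → #(topSet q x)ᶜ = Fintype.card O - x := fun q hq => by
    rw [card_compl, card_topSet hq hx]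
  have hbound : ∀ a ∈ Hᶜ, deficit sc tb P h a ≤ Q.countP (fun q => a ∈ (topSet q x)ᶜ) :=
    fun a ha => (deficit_approvalVec_le_min_countP htb
      (hsep h hh a (mem_compl.1 ha))).trans (min_le_right _ _)
  refine greedy_demands_met (y := vetoed) (n := fun l a => deficit sc tb (profile l) h a)
    (fun l => compl_subset_compl.2 (hsub l))
    (fun l => hcard _ (isVote_buildVote (isVote_swf sc htb _).1 H)) ?_ ?_ ?_ ?_ d
    (mem_compl.2 hd)
  · intro l a ha b hb hby
    have haH : a ∉ H := fun hmem => mem_compl.1 ha (hsub l hmem)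
    exact deficit_le_deficit_right htb (le_of_mem_topSet_buildVote
      (iff_of_false (mem_compl.1 hb) haH) (notMem_compl.1 hby) (mem_compl.1 ha)) h
  · intro l a _
    simp only [profile, append_stageProfile_succ]
    exact deficit_concat_of_mem (hsub l hh) a
  · simpa [profile, stageProfile] using fun a ha => (hbound a ha).trans List.countP_le_length
  · calc ∑ a ∈ Hᶜ, deficit sc tb (profile 0) h a
        ≤ ∑ a ∈ Hᶜ, Q.countP (fun q => a ∈ (topSet q x)ᶜ) := by
          simpa [profile, stageProfile] using sum_le_sum hbound
      _ ≤ ∑ a, Q.countP (fun q => a ∈ (topSet q x)ᶜ) := sum_le_sum_of_subset (subset_univ _)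
      _ = Q.length * (Fintype.card O - x) := sum_countP_mem fun q hq => hcard q (hQ q hq)

theorem RanksOnTop.swf_stageProfile (hx : x ≤ Fintype.card O) (htb : Function.Injective tb)
    (hQ : ∀ q ∈ Q, IsVote q)
    (hsep : RanksOnTop (swf (approvalVec (Fintype.card O) x) tb (P ++ Q)) H) :
    RanksOnTop (swf (approvalVec (Fintype.card O) x) tb
      (P ++ stageProfile (approvalVec (Fintype.card O) x) tb P H Q.length)) H := by
  intro h hh d hd
  rw [swf_lt_swf_iff_deficit_eq_zero htb (ne_of_mem_of_not_mem hh hd)]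
  rcases le_total x #H with hxH | hHx
  · exact deficit_stageProfile_eq_zero_of_le_card hx htb hQ hsep hxH hh hd
  · exact deficit_stageProfile_eq_zero_of_card_le hx htb hQ hsep hHx hh hd

end GreedyOptimality

section RationalCompromise

variable {pt po : O → ℕ} {p a b : O} {i : ℕ}

theorem rcIndex_mem_Icc [Nonempty O] (pt po : O → ℕ) :
    rcIndex pt po ∈ Icc 1 (Fintype.card O) := by
  have hmem : Fintype.card O ∈ {j | 1 ≤ j ∧ (topSet pt j ∩ topSet po j).Nonempty} :=
    ⟨Fintype.card_pos, by simp [topSet]⟩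
  exact mem_Icc.2 ⟨(Nat.sInf_mem ⟨_, hmem⟩).1, Nat.sInf_le hmem⟩

theorem two_mul_rcIndex_le [Nonempty O] (hpt : IsVote pt) (hpo : IsVote po) :
    2 * rcIndex pt po ≤ Fintype.card O + #(RC pt po) := by
  have hle := (mem_Icc.1 (rcIndex_mem_Icc pt po)).2
  have hcard := card_union_add_card_inter (topSet pt (rcIndex pt po)) (topSet po (rcIndex pt po))
  rw [card_topSet hpt hle, card_topSet hpo hle] at hcard
  have hunion := card_le_univ (topSet pt (rcIndex pt po) ∪ topSet po (rcIndex pt po))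
  rw [RC]
  omega

theorem card_Hset (hpt : Function.Injective pt) (hpo : IsVote po) (hi : 1 ≤ i)
    (hi' : 2 * i ≤ Fintype.card O + 1) (hp : p ∈ topSet po i) : #(Hset pt po p i) = i := by
  have hcompl : #(univ \ topSet po i) = Fintype.card O - i := by
    rw [card_univ_sdiff, card_topSet hpo (by omega)]
  rw [Hset, erase_eq_of_notMem (by simp [hp]), card_insert_of_notMem (by simp [topWithin, hp]),
    card_topWithin hpt (by omega)]
  omega

theorem lt_of_mem_Hset (ha : a ∈ Hset pt po p i) (hap : a ≠ p) (hb : b ∉ Hset pt po p i)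
    (hbo : b ∉ topSet po i) : pt b < pt a := by
  rw [Hset, mem_insert] at ha hb
  have ha' := ha.resolve_left hap
  rw [not_or] at hb
  by_contra! hle
  refine hb.2 (mem_filter.2 ⟨by simp [hb.1, hbo], ?_⟩)
  exact (card_le_card (monotone_filter_right _ fun o _ ho => hle.trans_lt ho)).trans_lt
    (mem_filter.1 ha').2

end RationalCompromise

section CriticalSets

variable {sc : ℕ → ℤ} {tb : O → ℕ} {P : List (O → ℕ)} {pt : O → ℕ} {H : Finset O} {k : ℕ}

theorem Uset_subset : Uset sc tb P pt H k ⊆ H := by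
  have hUaux : ∀ s, Uaux sc tb P pt H k s ⊆ H := by
    intro s
    induction s with
    | zero => exact filter_subset _ _
    | succ s ih =>
      refine union_subset ih fun u hu => ?_
      obtain ⟨l, -, -, ⟨u', hu', hlt⟩, -⟩ := (mem_filter.1 hu).2
      exact (ranksOnTop_buildVote _ H).mem_of_lt (ih hu') hlt
  intro u hu
  obtain ⟨s, hs⟩ := (mem_filter.1 hu).2
  exact hUaux s hs

theorem Dset_subset_compl : Dset sc tb P pt H k ⊆ Hᶜ := by
  have hDaux : ∀ s, Daux sc tb P pt H k s ⊆ Hᶜ := by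
    intro s
    induction s with
    | zero => exact (filter_subset _ _).trans_eq (compl_eq_univ_sdiff H).symm
    | succ s ih =>
      refine union_subset ih fun d hd => mem_compl.2 fun hdH => ?_
      obtain ⟨l, -, -, ⟨d', hd', hlt⟩, -⟩ := (mem_filter.1 hd).2
      exact mem_compl.1 (ih hd') ((ranksOnTop_buildVote _ H).mem_of_lt hdH hlt)
  intro d hd
  obtain ⟨s, hs⟩ := (mem_filter.1 hd).2
  exact hDaux s hs

theorem Uset_nonempty (hH : H.Nonempty) : (Uset sc tb P pt H k).Nonempty := by
  obtain ⟨u, hu, hmin⟩ := H.exists_min_image pt hH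
  refine ⟨u, mem_filter.2 ⟨mem_univ u, 0, mem_filter.2 ⟨hu, ?_⟩⟩⟩
  rw [Nat.lt_one_iff, card_eq_zero, filter_eq_empty_iff]
  exact fun o ho => (hmin o ho).not_gt

theorem Dset_nonempty (hH : Hᶜ.Nonempty) : (Dset sc tb P pt H k).Nonempty := by
  obtain ⟨d, hd, hmax⟩ := Hᶜ.exists_max_image pt hH
  rw [compl_eq_univ_sdiff] at hd hmax
  refine ⟨d, mem_filter.2 ⟨mem_univ d, 0, mem_filter.2 ⟨hd, ?_⟩⟩⟩
  rw [Nat.lt_one_iff, card_eq_zero, filter_eq_empty_iff]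
  exact fun o ho => (hmax o ho).not_gt

theorem RanksOnTop.exists_lowest_Uset_highest_Dset {r : O → ℕ} (htop : RanksOnTop r H)
    (hr : Function.Injective r) (hH : H.Nonempty) (hHc : Hᶜ.Nonempty) :
    ∃ u ∈ Uset sc tb P pt H k, ∃ d ∈ Dset sc tb P pt H k,
      (∀ v ∈ Uset sc tb P pt H k, v ≠ u → r u < r v) ∧
      (∀ v ∈ Dset sc tb P pt H k, v ≠ d → r v < r d) ∧ r d < r u := by
  obtain ⟨u, hu, hlowest⟩ :=
    exists_mem_forall_ne_lt hr (Uset_nonempty (sc := sc) (tb := tb) (P := P) (pt := pt) hH)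
  obtain ⟨d, hd, hhighest⟩ := exists_mem_forall_ne_lt (OrderDual.toDual.injective.comp hr)
    (Dset_nonempty (sc := sc) (tb := tb) (P := P) (pt := pt) hHc)
  exact ⟨u, hu, d, hd, hlowest, hhighest,
    htop u (Uset_subset hu) d (mem_compl.1 (Dset_subset_compl hd))⟩

end CriticalSets

section Manipulation

variable {x i : ℕ} {sc : ℕ → ℤ} {tb : O → ℕ} {P Q : List (O → ℕ)} {po : O → ℕ} {p : O}

theorem exists_ranksOnTop_Hset (htb : Function.Injective tb) (hQ : ∀ q ∈ Q, IsVote q)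
    (hcard : #(Hset (swf sc tb P) po p i) = #(topSet (swf sc tb (P ++ Q)) i))
    (hinter : topSet (swf sc tb (P ++ Q)) i ∩ topSet po i = {p}) :
    ∃ Q' : List (O → ℕ), Q'.length = Q.length ∧ (∀ q ∈ Q', IsVote q) ∧
      RanksOnTop (swf sc tb (P ++ Q')) (Hset (swf sc tb P) po p i) := by
  set H := Hset (swf sc tb P) po p i
  set T := topSet (swf sc tb (P ++ Q)) i
  have hpT : p ∈ T := (mem_inter.1 (hinter.symm ▸ mem_singleton_self p)).1
  have hlt : ∀ a ∈ H \ T, ∀ b ∈ T \ H, swf sc tb P b < swf sc tb P a := by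
    intro a ha b hb
    rw [mem_sdiff] at ha hb
    refine lt_of_mem_Hset ha.1 (ne_of_mem_of_not_mem hpT ha.2).symm hb.2 fun hbo => hb.2 ?_
    have hbp : b = p := mem_singleton.1 (hinter ▸ mem_inter.2 ⟨hb.1, hbo⟩)
    exact hbp ▸ mem_insert_self p _
  obtain ⟨σ, hHT, hTH, hfix⟩ := exists_perm_exchange hcard
  refine ⟨Q.map (· ∘ σ), List.length_map _, ?_, (ranksOnTop_topSet _ i).swf_map_comp htb
    (T := T) (σ := σ) ?_ ?_ ?_⟩
  · simpa using fun q hq => (hQ q hq).comp_perm σ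
  · grind
  · intro a ha
    by_cases haT : a ∈ T
    · rw [hfix a (iff_of_true ha haT)]
    · have haHT := mem_sdiff.2 ⟨ha, haT⟩
      exact (hlt a haHT (σ a) (hHT a haHT)).le
  · intro a ha
    by_cases haT : a ∈ T
    · have haTH := mem_sdiff.2 ⟨haT, ha⟩
      exact (hlt (σ a) (hTH a haTH) a haTH).le
    · rw [hfix a (iff_of_false ha haT)]

theorem exists_iteration_ranksOnTop (hx : x ≤ Fintype.card O) (htb : Function.Injective tb)
    (hpo : IsVote po) (hQ : ∀ q ∈ Q, IsVote q)
    (hRC : RC (swf (approvalVec (Fintype.card O) x) tb (P ++ Q)) po = {p}) :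
    ∃ i, 1 ≤ i ∧ 2 * i ≤ Fintype.card O + 1 ∧
      #(Hset (swf (approvalVec (Fintype.card O) x) tb P) po p i) = i ∧
      RanksOnTop (stageSwfAlg (approvalVec (Fintype.card O) x) tb P po p i Q.length)
        (Hset (swf (approvalVec (Fintype.card O) x) tb P) po p i) := by
  set sc := approvalVec (Fintype.card O) x
  have : Nonempty O := ⟨p⟩
  have hvote := isVote_swf sc htb (P ++ Q)
  obtain ⟨hi, him⟩ := mem_Icc.1 (rcIndex_mem_Icc (swf sc tb (P ++ Q)) po)
  have hi' := two_mul_rcIndex_le hvote hpo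
  rw [hRC, card_singleton] at hi'
  have hpo' : p ∈ topSet po (rcIndex (swf sc tb (P ++ Q)) po) :=
    (mem_inter.1 (hRC.symm ▸ mem_singleton_self p)).2
  have hcard := card_Hset (isVote_swf sc htb P).1 hpo hi hi' hpo'
  obtain ⟨Q', hlength, hQ', htop⟩ :=
    exists_ranksOnTop_Hset htb hQ (hcard.trans (card_topSet hvote him).symm) hRC
  exact ⟨_, hi, hi', hcard, hlength ▸ htop.swf_stageProfile hx htb hQ'⟩

end Manipulation

/-- Lemma 7: run Algorithm 2 with the x-approval rule and `k` manipulators;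
let `u*` be the member of `U^i` ranked lowest among `U^i` and `d*` the member of `D^i`
ranked highest among `D^i` in `p_t^a = F(p⃗ ∪ p⃗_M)`.  If at every iteration
`i ∈ {1, …, ⌈m/2⌉}` the outcome `d*` is ranked above `u*` in `p_t^a`, then no profile of
`k` manipulative votes makes `p` the unique Rational Compromise outcome, and Algorithm 2
returns false. -/
theorem lemma7_failure_condition
    (x k : ℕ) (hx1 : 1 ≤ x) (hx2 : x < Fintype.card O)
    (tb : O → ℕ) (P : List (O → ℕ)) (po : O → ℕ) (p : O)
    (htb : Function.Injective tb) (hP : ∀ q ∈ P, IsVote q) (hpo : IsVote po)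
    (hfail : ∀ i, 1 ≤ i → i ≤ (Fintype.card O + 1) / 2 →
      ∀ ustar ∈ UsetAlg (approvalVec (Fintype.card O) x) tb P po p i k,
        ∀ dstar ∈ DsetAlg (approvalVec (Fintype.card O) x) tb P po p i k,
          (∀ u ∈ UsetAlg (approvalVec (Fintype.card O) x) tb P po p i k, u ≠ ustar →
            stageSwfAlg (approvalVec (Fintype.card O) x) tb P po p i k ustar <
              stageSwfAlg (approvalVec (Fintype.card O) x) tb P po p i k u) →
          (∀ d ∈ DsetAlg (approvalVec (Fintype.card O) x) tb P po p i k, d ≠ dstar →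
            stageSwfAlg (approvalVec (Fintype.card O) x) tb P po p i k d <
              stageSwfAlg (approvalVec (Fintype.card O) x) tb P po p i k dstar) →
          stageSwfAlg (approvalVec (Fintype.card O) x) tb P po p i k ustar <
            stageSwfAlg (approvalVec (Fintype.card O) x) tb P po p i k dstar) :
    (¬ ∃ PM : List (O → ℕ), PM.length = k ∧ (∀ q ∈ PM, IsVote q) ∧
        RC (swf (approvalVec (Fintype.card O) x) tb (P ++ PM)) po = {p}) ∧
      ∀ i, 1 ≤ i → i ≤ (Fintype.card O + 1) / 2 →
        RC (stageSwfAlg (approvalVec (Fintype.card O) x) tb P po p i k) po ≠ {p} := by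
  have hno : ¬ ∃ PM : List (O → ℕ), PM.length = k ∧ (∀ q ∈ PM, IsVote q) ∧
      RC (swf (approvalVec (Fintype.card O) x) tb (P ++ PM)) po = {p} := by
    rintro ⟨PM, rfl, hPM, hRC⟩
    obtain ⟨i, hi, hi', hcard, htop⟩ := exists_iteration_ranksOnTop hx2.le htb hpo hPM hRC
    have hHc : (Hset (swf (approvalVec (Fintype.card O) x) tb P) po p i)ᶜ.Nonempty := by
      rw [← card_pos, card_compl, hcard]
      omega
    obtain ⟨u, hu, d, hd, hlowest, hhighest, hlt⟩ :=
      htop.exists_lowest_Uset_highest_Dset (isVote_swf _ htb _).1 (insert_nonempty _ _) hHc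
    exact hlt.asymm (hfail i hi (by omega) u hu d hd hlowest hhighest)
  exact ⟨hno, fun i _ _ hRC =>
    hno ⟨_, length_stageProfile _ _ _ _ _, isVote_of_mem_stageProfile htb, hRC⟩⟩
end

section
/- Lemma 10: run Algorithm 2 with the Borda rule and k manipulators, fix an iteration i (1 ≤ i ≤ ⌈m/2⌉), and let s_{k−1}(c) be the total score of candidate c in F(p⃗ ∪ p⃗_M) after stage k−1. Then the sets of integers {s_{k−1}(u) : u ∈ U^i} and {s_{k−1}(d) : d ∈ D^i} are 1-dense. -/
open Finset
open scoped Classical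

variable {O : Type*} [Fintype O] [DecidableEq O]

/-- A finite set of integers is 1-dense if, when sorted non-increasingly, consecutive
elements differ by at most one; equivalently, every non-maximal element is within one of
the next larger element. -/
def OneDense (B : Finset ℤ) : Prop :=
  ∀ b ∈ B, (∃ c ∈ B, b < c) → ∃ c ∈ B, b < c ∧ c ≤ b + 1

/-!
Within `H`, each manipulator's Borda vote lists the candidates in reverse order of their current
scores, in consecutive positions.  Hence from one position of such a block to the next lower one
the new score drops by at most one, so the new scores between those of two members are filled in
by the members listed between them.

Suppose the scores of `U^i` after stage `k - 1` had a gap, separating an upper part `A` from a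
lower part `B`.  If some `b ∈ B` were listed below some `a ∈ A` by the last vote, a candidate with
score just above `B` would be listed between them; it passes from above `b` to below the best
member of `B` in the next vote, so it belongs to `U^i`, contradicting the gap.  Thus `A` is below
`B` in that vote, and the gap was already present before it.  Going back, `A` is below `B` in
every vote, so the candidates generated from the top of the first vote never leave `B` and `A` is
empty.  Negating scores and votes turns this argument for `U^i` into the one for `D^i`.
-/

open OrderDual

section Rank

variable {ι α : Type*} [LinearOrder α] {K : Finset ι} {g : ι → α} {x y : ι}

/-- The position of `x` relative to the group `K` in the ranking `g`: the number of members
of `K` that `g` ranks strictly below `x`.  Both `swf` and `buildVote` are of this form. -/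
def rankIn (K : Finset ι) (g : ι → α) (x : ι) : ℕ :=
  #{z ∈ K | g z < g x}

lemma rankIn_le_rankIn_iff (hy : y ∈ K) : rankIn K g x ≤ rankIn K g y ↔ g x ≤ g y := by
  constructor
  · contrapose!
    intro hlt
    refine card_lt_card (ssubset_iff_of_subset ?_ |>.mpr ⟨y, by simp [hy, hlt], by simp⟩)
    exact monotone_filter_right K fun z _ hz => hz.trans hlt
  · intro hle
    exact card_le_card (monotone_filter_right K fun z _ hz => hz.trans_le hle)

lemma rankIn_lt_rankIn_iff (hx : x ∈ K) : rankIn K g x < rankIn K g y ↔ g x < g y := by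
  rw [← not_le, rankIn_le_rankIn_iff hx, not_le]

lemma rankIn_lt_card (hx : x ∈ K) : rankIn K g x < #K :=
  card_lt_card (filter_ssubset.mpr ⟨x, hx, lt_irrefl _⟩)

lemma injOn_rankIn (hg : Function.Injective g) : Set.InjOn (rankIn K g) K := fun _ hx _ hy h =>
  hg (le_antisymm ((rankIn_le_rankIn_iff hy).mp h.le) ((rankIn_le_rankIn_iff hx).mp h.ge))

lemma image_rankIn (hg : Function.Injective g) : rankIn K g '' K = Set.Iio #K := by
  have hmaps : Set.MapsTo (rankIn K g) K (range #K) := fun x hx =>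
    mem_coe.mpr (mem_range.mpr (rankIn_lt_card hx))
  rw [(surjOn_of_injOn_of_card_le _ hmaps (injOn_rankIn hg) (by simp)).image_eq_of_mapsTo hmaps,
    coe_range]

end Rank

section ReverseBorda

variable {ι : Type*} {K : Finset ι}

/-- The Borda vote `v` lists the group `K` as one contiguous block, in reverse order of the
scores `s`.  Votes take values in `ℤ` so that negating `s` and `v` exchanges top and bottom. -/
structure ReversesOn (K : Finset ι) (s v : ι → ℤ) : Prop where
  injOn : Set.InjOn v K
  ordConnected : (v '' K).OrdConnected
  lt_of_score_lt : ∀ x ∈ K, ∀ y ∈ K, s x < s y → v y < v x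

namespace ReversesOn

variable {s v : ι → ℤ}

lemma neg (h : ReversesOn K s v) : ReversesOn K (-s) (-v) where
  injOn x hx y hy hxy := h.injOn hx hy (neg_injective hxy)
  ordConnected := by
    have := h.ordConnected.preimage_anti (f := Neg.neg) fun _ _ => neg_le_neg
    rwa [Set.neg_preimage, ← Set.image_neg_eq_neg, Set.image_image] at this
  lt_of_score_lt x hx y hy hxy := neg_lt_neg (h.lt_of_score_lt y hy x hx (neg_lt_neg_iff.mp hxy))

/-- Moving down the block by one position, the new score `s + v` drops by at most one, because
the old score `s` does not decrease. -/
lemma exists_add_eq (h : ReversesOn K s v) {a b : ι} (ha : a ∈ K) (hb : b ∈ K) {n : ℤ}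
    (hab : v b ≤ v a) (hbn : s b + v b ≤ n) (hna : n ≤ s a + v a) :
    ∃ z ∈ K, v b ≤ v z ∧ s z + v z = n := by
  obtain ⟨z, hz, hmin⟩ := exists_min_image {z ∈ K | v b ≤ v z ∧ n ≤ s z + v z} v
    ⟨a, by simp [ha, hab, hna]⟩
  simp only [mem_filter] at hz hmin
  obtain ⟨hzK, hbz, hnz⟩ := hz
  refine ⟨z, hzK, hbz, le_antisymm (not_lt.mp fun hlt => ?_) hnz⟩
  have hbz' : v b < v z := hbz.lt_of_ne fun heq => by
    rw [← h.injOn hb hzK heq] at hlt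
    exact hlt.not_ge hbn
  obtain ⟨y, hyK, hy⟩ : v z - 1 ∈ v '' K :=
    h.ordConnected.out ⟨b, hb, rfl⟩ ⟨z, hzK, rfl⟩ ⟨by omega, by omega⟩
  have hzy : s z ≤ s y := not_lt.mp fun hyz => by
    have := h.lt_of_score_lt y hyK z hzK hyz
    omega
  have := hmin y ⟨hyK, by omega, by omega⟩
  omega

lemma gap_of_gap_add (h : ReversesOn K s v) {A B : Set ι} (hA : A ⊆ K) (hB : B ⊆ K)
    (hfill : ∀ z ∈ K, ∀ b ∈ B, ∀ b' ∈ B, v b < v z → s b' + v b' < s z + v z → z ∈ A ∪ B)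
    (hgap : ∀ a ∈ A, ∀ b ∈ B, s b + v b + 1 < s a + v a) :
    ∀ a ∈ A, ∀ b ∈ B, s b + 1 < s a := by
  intro a ha b hb
  have hgap_ab := hgap a ha b hb
  suffices v a ≤ v b by omega
  by_contra! hba
  obtain ⟨b', hb', hmax⟩ :=
    Set.exists_max_image B (s + v) (K.finite_toSet.subset hB) ⟨b, hb⟩
  simp only [Pi.add_apply] at hmax
  have hbb' := hmax b hb
  obtain ⟨z, hzK, hbz, hz⟩ := h.exists_add_eq (hA ha) (hB hb) (n := s b' + v b' + 1) hba.le
    (by omega) (hgap a ha b' hb').le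
  have hbz' : v b < v z := hbz.lt_of_ne fun heq => by
    rw [← h.injOn (hB hb) hzK heq] at hz
    omega
  rcases hfill z hzK b hb b' hb' hbz' (by omega) with hzA | hzB
  · have := hgap z hzA b' hb'
    omega
  · have := hmax z hzB
    omega

end ReversesOn

lemma reversesOn_of_eq_add_rankIn {α : Type*} [LinearOrder α] {r : ι → α} {s v : ι → ℤ} {c : ℕ}
    (hr : Function.Injective r) (hs : ∀ x y, s x < s y → r x < r y)
    (hv : ∀ x ∈ K, v x = (c + rankIn K (toDual ∘ r) x : ℕ)) : ReversesOn K s v where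
  injOn x hx y hy hxy := by
    rw [hv x hx, hv y hy] at hxy
    exact injOn_rankIn (toDual.injective.comp hr) hx hy (by omega)
  ordConnected := by
    have himage : v '' K = Set.Ico (c : ℤ) (c + #K) := by
      ext n
      have hrank := Set.ext_iff.mp (image_rankIn (K := K) (toDual.injective.comp hr))
      constructor
      · rintro ⟨x, hx, rfl⟩
        have := (hrank _).mp ⟨x, hx, rfl⟩
        simp only [Set.mem_Iio] at this
        rw [hv x hx, Set.mem_Ico]
        omega
      · rintro ⟨hcn, hnc⟩
        obtain ⟨x, hx, hxn⟩ := (hrank (n - c).toNat).mpr (by simp only [Set.mem_Iio]; omega)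
        exact ⟨x, hx, by rw [hv x hx]; omega⟩
    rw [himage]
    exact Set.ordConnected_Ico
  lt_of_score_lt x hx y hy hxy := by
    rw [hv x hx, hv y hy, Nat.cast_lt, add_lt_add_iff_left, rankIn_lt_rankIn_iff hy]
    exact toDual_lt_toDual.mpr (hs x y hxy)

/-- The common form of the sets `U^i` and `D^i`, where `v t` is the vote of stage `t + 1`: the
top member of `K` in the first vote, closed under adding every candidate that is above some
member in one vote and below some member in the next, up to the vote `v T`.  For `D^i` the
votes are negated. -/
inductive OvertakeClosure (K : Finset ι) (v : ℕ → ι → ℤ) (T : ℕ) : ι → Prop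
  | top {x : ι} (hx : x ∈ K) (hmax : ∀ y ∈ K, v 0 y ≤ v 0 x) : OvertakeClosure K v T x
  | overtaken {x y z : ι} {t : ℕ} (ht : t < T) (hy : OvertakeClosure K v T y)
      (hz : OvertakeClosure K v T z) (hyx : v t y < v t x) (hxz : v (t + 1) x < v (t + 1) z) :
      OvertakeClosure K v T x

lemma exists_mem_iff_overtakeClosure {v : ℕ → ι → ℤ} {T : ℕ} {F : ℕ → Finset ι}
    (hzero : ∀ x, x ∈ F 0 ↔ x ∈ K ∧ ∀ y ∈ K, v 0 y ≤ v 0 x)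
    (hsucc : ∀ n x, x ∈ F (n + 1) ↔ x ∈ F n ∨
      ∃ t < T, (∃ y ∈ F n, v t y < v t x) ∧ ∃ z ∈ F n, v (t + 1) x < v (t + 1) z) {x : ι} :
    (∃ n, x ∈ F n) ↔ OvertakeClosure K v T x := by
  have hmono : Monotone F := monotone_nat_of_le_succ fun n x hx => (hsucc n x).mpr (.inl hx)
  constructor
  · rintro ⟨n, hn⟩
    induction n generalizing x with
    | zero => exact .top ((hzero x).mp hn).1 ((hzero x).mp hn).2
    | succ n ih =>
      rcases (hsucc n x).mp hn with hx | ⟨t, ht, ⟨y, hy, hyx⟩, z, hz, hxz⟩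
      · exact ih hx
      · exact .overtaken ht (ih hy) (ih hz) hyx hxz
  · intro hx
    induction hx with
    | top hx hmax => exact ⟨0, (hzero _).mpr ⟨hx, hmax⟩⟩
    | overtaken ht _ _ hyx hxz ihy ihz =>
      obtain ⟨m, hm⟩ := ihy
      obtain ⟨n, hn⟩ := ihz
      exact ⟨max m n + 1, (hsucc _ _).mpr (.inr ⟨_, ht, ⟨_, hmono (le_max_left m n) hm, hyx⟩,
        _, hmono (le_max_right m n) hn, hxz⟩)⟩

/-- A run of reverse Borda votes on the group `K`: `s t` are the scores after `t` stages, and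
the next vote `v t` reverses `s t` on `K` and puts the members of `K` in its top positions. -/
structure IsReverseBordaRun (K : Finset ι) (s v : ℕ → ι → ℤ) : Prop where
  reversesOn : ∀ t, ReversesOn K (s t) (v t)
  mem_of_lt : ∀ t, ∀ x ∈ K, ∀ y, v t x < v t y → y ∈ K
  score_succ : ∀ t x, s (t + 1) x = s t x + v t x

namespace IsReverseBordaRun

variable {s v : ℕ → ι → ℤ} {T : ℕ} {A B : Set ι}

lemma mem_of_overtakeClosure (h : IsReverseBordaRun K s v) {x : ι}
    (hx : OvertakeClosure K v T x) : x ∈ K := by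
  induction hx with
  | top hx _ => exact hx
  | overtaken _ _ _ hyx _ ihy _ => exact h.mem_of_lt _ _ ihy _ hyx

lemma gap_of_final_gap (h : IsReverseBordaRun K s v)
    (hAB : A ∪ B = {x | OvertakeClosure K v T x})
    (hgap : ∀ a ∈ A, ∀ b ∈ B, s T b + 1 < s T a) {t : ℕ} (ht : t ≤ T) :
    ∀ a ∈ A, ∀ b ∈ B, s t b + 1 < s t a := by
  have hclosure : ∀ {x}, x ∈ A ∪ B → OvertakeClosure K v T x := fun hx => hAB.subset hx
  have hA : A ⊆ K := fun a ha => h.mem_of_overtakeClosure (hclosure (.inl ha))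
  have hB : B ⊆ K := fun b hb => h.mem_of_overtakeClosure (hclosure (.inr hb))
  induction ht using Nat.decreasingInduction with
  | self => exact hgap
  | of_succ t ht ih =>
    refine (h.reversesOn t).gap_of_gap_add hA hB (fun z hz b hb b' hb' hbz hb'z => ?_)
      (by simpa only [h.score_succ] using ih)
    have hzb' : v (t + 1) z < v (t + 1) b' := (h.reversesOn (t + 1)).lt_of_score_lt b' (hB hb') z hz
      (by simpa only [h.score_succ] using hb'z)
    exact hAB.superset (.overtaken ht (hclosure (.inr hb)) (hclosure (.inr hb')) hbz hzb')

lemma exists_le_add_one (h : IsReverseBordaRun K s v)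
    (hAB : A ∪ B = {x | OvertakeClosure K v T x}) (hA : A.Nonempty) (hB : B.Nonempty) :
    ∃ a ∈ A, ∃ b ∈ B, s T a ≤ s T b + 1 := by
  by_contra! hgap
  have hmem : ∀ {x}, x ∈ A ∪ B → x ∈ K := fun hx => h.mem_of_overtakeClosure (hAB.subset hx)
  have habove : ∀ t ≤ T, ∀ a ∈ A, ∀ b ∈ B, v t a < v t b := fun t ht a ha b hb =>
    (h.reversesOn t).lt_of_score_lt b (hmem (.inr hb)) a (hmem (.inl ha))
      ((lt_add_one _).trans (h.gap_of_final_gap hAB hgap ht a ha b hb))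
  have hnotMem : ∀ x, OvertakeClosure K v T x → x ∉ A := by
    intro x hx
    induction hx with
    | top _ hmax =>
      obtain ⟨b, hb⟩ := hB
      exact fun hxA => (habove 0 T.zero_le _ hxA b hb).not_ge (hmax b (hmem (.inr hb)))
    | overtaken ht hy _ hyx _ ihy _ =>
      have hyB := (hAB.superset hy).resolve_left ihy
      exact fun hxA => (habove _ ht.le _ hxA _ hyB).not_gt hyx
  obtain ⟨a, ha⟩ := hA
  exact hnotMem a (hAB.subset (.inl ha)) ha

end IsReverseBordaRun

lemma oneDense_image_of_union {W : Finset ι} {f : ι → ℤ}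
    (h : ∀ A B : Set ι, A ∪ B = W → A.Nonempty → B.Nonempty → ∃ a ∈ A, ∃ b ∈ B, f a ≤ f b + 1) :
    OneDense (W.image f) := by
  simp only [OneDense, mem_image]
  rintro _ ⟨x, hx, rfl⟩ ⟨_, ⟨y, hy, rfl⟩, hxy⟩
  obtain ⟨a, ⟨haW, ha⟩, b, ⟨-, hb⟩, hab⟩ := h {u ∈ W | f x < f u} {u ∈ W | f u ≤ f x}
    (by ext u; simpa [← and_or_left] using fun _ => lt_or_ge _ _) ⟨y, hy, hxy⟩ ⟨x, hx, le_rfl⟩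
  exact ⟨f a, ⟨a, haW, rfl⟩, ha, hab.trans (by omega)⟩

end ReverseBorda

section Ranking

variable {ι : Type*} {r : ι → ℕ} {S : Finset ι} {x : ι}

lemma mem_botWithin_one : x ∈ botWithin r S 1 ↔ x ∈ S ∧ ∀ y ∈ S, r x ≤ r y := by
  simp [botWithin, filter_eq_empty_iff]

lemma mem_topWithin_one : x ∈ topWithin r S 1 ↔ x ∈ S ∧ ∀ y ∈ S, r y ≤ r x := by
  simp [topWithin, filter_eq_empty_iff]

variable [Fintype ι] {sc : ℕ → ℤ} {tb : ι → ℕ} {P : List (ι → ℕ)}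

lemma swf_eq_rankIn :
    swf sc tb P = rankIn univ fun c => toLex (score sc P c, toDual (tb c)) := by
  ext c
  simp only [swf, rankIn, Prod.Lex.toLex_lt_toLex, toDual_lt_toDual]

lemma swf_lt_swf_of_score_lt {x y : ι} (h : score sc P x < score sc P y) :
    swf sc tb P x < swf sc tb P y := by
  rw [swf_eq_rankIn, rankIn_lt_rankIn_iff (mem_univ x)]
  exact Prod.Lex.toLex_lt_toLex.mpr (.inl h)

lemma swf_injective (htb : Function.Injective tb) : Function.Injective (swf sc tb P) := by
  rw [swf_eq_rankIn, ← Set.injOn_univ, ← coe_univ]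
  exact injOn_rankIn fun x y hxy => htb (congrArg (fun c => ofDual (ofLex c).2) hxy)

end Ranking

section Algorithm

variable {sc : ℕ → ℤ} {tb : O → ℕ} {P : List (O → ℕ)} {H : Finset O} {r : O → ℕ} {x y : O}

lemma buildVote_of_mem (hx : x ∈ H) :
    buildVote r H x = Fintype.card O - #H + rankIn H (toDual ∘ r) x :=
  if_pos hx

lemma buildVote_of_notMem (hx : x ∉ H) : buildVote r H x = rankIn Hᶜ (toDual ∘ r) x := by
  rw [buildVote, if_neg hx, rankIn]
  congr 1
  ext z
  simp

lemma buildVote_lt_of_notMem_of_mem (hx : x ∉ H) (hy : y ∈ H) :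
    buildVote r H x < buildVote r H y := by
  have := rankIn_lt_card (g := toDual ∘ r) (mem_compl.mpr hx)
  rw [buildVote_of_notMem hx, buildVote_of_mem hy, ← card_compl]
  omega

lemma buildVote_le_iff_of_mem (hx : x ∈ H) (hy : y ∈ H) :
    buildVote r H x ≤ buildVote r H y ↔ r y ≤ r x := by
  rw [buildVote_of_mem hx, buildVote_of_mem hy, add_le_add_iff_left, rankIn_le_rankIn_iff hy]
  exact toDual_le_toDual

lemma buildVote_le_iff_of_notMem (hx : x ∉ H) (hy : y ∉ H) :
    buildVote r H x ≤ buildVote r H y ↔ r y ≤ r x := by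
  rw [buildVote_of_notMem hx, buildVote_of_notMem hy, rankIn_le_rankIn_iff (mem_compl.mpr hy)]
  exact toDual_le_toDual

lemma score_stageProfile_succ (t : ℕ) (x : O) :
    score bordaVec (P ++ stageProfile bordaVec tb P H (t + 1)) x =
      score bordaVec (P ++ stageProfile bordaVec tb P H t) x +
        stageVote bordaVec tb P H (t + 1) x := by
  simp [score, stageProfile, stageVote, bordaVec, add_assoc]

lemma isReverseBordaRun_stageVote (htb : Function.Injective tb) :
    IsReverseBordaRun H (fun t => score bordaVec (P ++ stageProfile bordaVec tb P H t))
      (fun t x => (stageVote bordaVec tb P H (t + 1) x : ℤ)) where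
  reversesOn _ := reversesOn_of_eq_add_rankIn (swf_injective htb)
    (fun _ _ => swf_lt_swf_of_score_lt) fun _ hx => congrArg Nat.cast (buildVote_of_mem hx)
  mem_of_lt _ _ hx _ hxy := by
    by_contra hy
    exact (Nat.cast_lt.mp hxy).not_gt (buildVote_lt_of_notMem_of_mem hy hx)
  score_succ := score_stageProfile_succ

lemma isReverseBordaRun_neg_stageVote (htb : Function.Injective tb) :
    IsReverseBordaRun Hᶜ (fun t => -score bordaVec (P ++ stageProfile bordaVec tb P H t))
      (fun t x => -(stageVote bordaVec tb P H (t + 1) x : ℤ)) where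
  reversesOn _ := ReversesOn.neg <| reversesOn_of_eq_add_rankIn (c := 0) (swf_injective htb)
    (fun _ _ => swf_lt_swf_of_score_lt) fun _ hx => congrArg Nat.cast <|
      (buildVote_of_notMem (mem_compl.mp hx)).trans (zero_add _).symm
  mem_of_lt _ _ hx _ hxy := mem_compl.mpr fun hy =>
    (Nat.cast_lt.mp (neg_lt_neg_iff.mp hxy)).not_gt
      (buildVote_lt_of_notMem_of_mem (mem_compl.mp hx) hy)
  score_succ t x := by
    simp only [Pi.neg_apply, score_stageProfile_succ, neg_add]

lemma exists_one_le_lt_add_one_iff {T : ℕ} {p : ℕ → Prop} :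
    (∃ l, 1 ≤ l ∧ l < T + 1 ∧ p l) ↔ ∃ t < T, p (t + 1) := by
  constructor
  · rintro ⟨_ | t, h1, ht, hp⟩
    · omega
    · exact ⟨t, by omega, hp⟩
  · rintro ⟨t, ht, hp⟩
    exact ⟨t + 1, by omega, by omega, hp⟩

lemma mem_Uset_iff_overtakeClosure {T : ℕ} :
    x ∈ Uset sc tb P (swf sc tb P) H (T + 1) ↔
      OvertakeClosure H (fun t c => (stageVote sc tb P H (t + 1) c : ℤ)) T x := by
  rw [Uset, mem_filter_univ]
  refine exists_mem_iff_overtakeClosure (fun x => ?_) fun n x => ?_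
  · rw [Uaux, mem_botWithin_one]
    refine and_congr_right fun hx => forall₂_congr fun y hy => ?_
    rw [Nat.cast_le, stageVote, buildVote_le_iff_of_mem hy hx, stageProfile, List.append_nil]
  · simp only [Uaux, mem_union, mem_filter_univ, exists_one_le_lt_add_one_iff, Nat.cast_lt]

lemma mem_Dset_iff_overtakeClosure {T : ℕ} :
    x ∈ Dset sc tb P (swf sc tb P) H (T + 1) ↔
      OvertakeClosure Hᶜ (fun t c => -(stageVote sc tb P H (t + 1) c : ℤ)) T x := by
  rw [Dset, mem_filter_univ]
  refine exists_mem_iff_overtakeClosure (fun x => ?_) fun n x => ?_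
  · rw [Daux, mem_topWithin_one, ← compl_eq_univ_sdiff]
    refine and_congr_right fun hx => forall₂_congr fun y hy => ?_
    rw [neg_le_neg_iff, Nat.cast_le, stageVote,
      buildVote_le_iff_of_notMem (mem_compl.mp hx) (mem_compl.mp hy), stageProfile,
      List.append_nil]
  · simp only [Daux, mem_union, mem_filter_univ, exists_one_le_lt_add_one_iff, neg_lt_neg_iff,
      Nat.cast_lt]

end Algorithm

theorem lemma10_one_dense_general (T : ℕ) (tb : O → ℕ) (P : List (O → ℕ)) (H : Finset O)
    (htb : Function.Injective tb) :
    OneDense ((Uset bordaVec tb P (swf bordaVec tb P) H (T + 1)).image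
        (score bordaVec (P ++ stageProfile bordaVec tb P H T))) ∧
      OneDense ((Dset bordaVec tb P (swf bordaVec tb P) H (T + 1)).image
        (score bordaVec (P ++ stageProfile bordaVec tb P H T))) := by
  constructor
  · refine oneDense_image_of_union fun A B hAB hA hB => ?_
    exact (isReverseBordaRun_stageVote htb).exists_le_add_one
      (hAB.trans (Set.ext fun _ => mem_Uset_iff_overtakeClosure)) hA hB
  · refine oneDense_image_of_union fun A B hAB hA hB => ?_
    obtain ⟨b, hb, a, ha, hab⟩ := (isReverseBordaRun_neg_stageVote htb).exists_le_add_one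
      ((Set.union_comm B A).trans (hAB.trans (Set.ext fun _ => mem_Dset_iff_overtakeClosure)))
      hB hA
    simp only [Pi.neg_apply] at hab
    exact ⟨a, ha, b, hb, by omega⟩

/-- Lemma 10: run Algorithm 2 with the Borda rule and `k` manipulators at a
fixed iteration `i`; the sets of scores `{s_{k−1}(u) : u ∈ U^i}` and
`{s_{k−1}(d) : d ∈ D^i}` after stage `k − 1` are 1-dense. -/
theorem lemma10_one_dense
    (k : ℕ) (hk : 1 ≤ k) (tb : O → ℕ) (P : List (O → ℕ)) (po : O → ℕ) (p : O) (i : ℕ)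
    (htb : Function.Injective tb) (hP : ∀ q ∈ P, IsVote q) (hpo : IsVote po)
    (hi1 : 1 ≤ i) (hi2 : i ≤ (Fintype.card O + 1) / 2) :
    OneDense ((UsetAlg bordaVec tb P po p i k).image
        (stageScoreAlg bordaVec tb P po p i (k - 1))) ∧
      OneDense ((DsetAlg bordaVec tb P po p i k).image
        (stageScoreAlg bordaVec tb P po p i (k - 1))) := by
  obtain ⟨T, rfl⟩ := Nat.exists_eq_add_of_le' hk
  exact lemma10_one_dense_general T tb P _ htb
end
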